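/- Let m ≥ 2 and let H be a connected simple graph with exactly 3m − 2 vertices. Then for any real numbers λ₁ < λ₂ < … < λ_m there exists a matrix N ∈ S(K₂ ∨ H) with spectrum {λ₁^(3), λ₂^(3), …, λ_m^(3)} (each λ_i an eigenvalue of multiplicity exactly 3). In particular, q(K₂ ∨ H) ≤ m. -/

import Mathlib

open Matrix Filter

/-- `A ∈ S(G)`: real symmetric matrix whose off-diagonal zero pattern is given by `G`. -/
def inS {V : Type*} (G : SimpleGraph V) (A : Matrix V V ℝ) : Prop :=
  A.IsSymm ∧ ∀ i j : V, i ≠ j → (A i j ≠ 0 ↔ G.Adj i j)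

/-- The spectrum of a matrix, as the multiset of roots of its characteristic polynomial. -/
noncomputable def specMultiset {V : Type*} [Fintype V] [DecidableEq V]
    (A : Matrix V V ℝ) : Multiset ℝ :=
  A.charpoly.roots

/-- The number of distinct eigenvalues of a matrix. -/
noncomputable def qMat {V : Type*} [Fintype V] [DecidableEq V] (A : Matrix V V ℝ) : ℕ :=
  (specMultiset A).toFinset.card

/-- `q(G)`: the minimum number of distinct eigenvalues over matrices in `S(G)`. -/
noncomputable def qGraph {V : Type*} [Fintype V] [DecidableEq V] (G : SimpleGraph V) : ℕ :=
  sInf {q | ∃ A : Matrix V V ℝ, inS G A ∧ qMat A = q}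

/-- The strong spectral property. -/
def HasSSP {V : Type*} [Fintype V] [DecidableEq V] (A : Matrix V V ℝ) : Prop :=
  ∀ X : Matrix V V ℝ, X.IsSymm → A * X = X * A →
    Matrix.hadamard A X = 0 → Matrix.hadamard (1 : Matrix V V ℝ) X = 0 → X = 0

/-- Generic realisability of a multiset of eigenvalues for a graph. -/
def GenericallyRealisable {V : Type*} [Fintype V] [DecidableEq V]
    (G : SimpleGraph V) (σ : Multiset ℝ) : Prop :=
  ∀ Y : Finset (V → ℝ), (∀ y ∈ Y, y ≠ 0) →
    ∃ (d : V → ℝ) (U : Matrix V V ℝ),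
      Multiset.map d Finset.univ.val = σ ∧ Uᵀ * U = 1 ∧
      inS G (U * Matrix.diagonal d * Uᵀ) ∧
      ∀ y ∈ Y, ∀ i, U.mulVec y i ≠ 0

/-- The partial join `(G₁, X) ∨ G₂`: the disjoint union of `G₁` and `G₂` together with all
edges joining vertices of `X ⊆ V(G₁)` to vertices of `G₂`. -/
def partialJoin {α β : Type*} (G₁ : SimpleGraph α) (X : Set α) (G₂ : SimpleGraph β) :
    SimpleGraph (α ⊕ β) where
  Adj x y :=
    (∃ a b, G₁.Adj a b ∧ x = Sum.inl a ∧ y = Sum.inl b) ∨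
    (∃ a b, G₂.Adj a b ∧ x = Sum.inr a ∧ y = Sum.inr b) ∨
    (∃ a ∈ X, ∃ b, x = Sum.inl a ∧ y = Sum.inr b) ∨
    (∃ a ∈ X, ∃ b, x = Sum.inr b ∧ y = Sum.inl a)
  symm := by
    constructor
    rintro x y (⟨a, b, hab, rfl, rfl⟩ | ⟨a, b, hab, rfl, rfl⟩ | ⟨a, ha, b, rfl, rfl⟩ |
      ⟨a, ha, b, rfl, rfl⟩)
    · exact Or.inl ⟨b, a, hab.symm, rfl, rfl⟩
    · exact Or.inr (Or.inl ⟨b, a, hab.symm, rfl, rfl⟩)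
    · exact Or.inr (Or.inr (Or.inr ⟨a, ha, b, rfl, rfl⟩))
    · exact Or.inr (Or.inr (Or.inl ⟨a, ha, b, rfl, rfl⟩))
  loopless := by
    constructor
    rintro x (⟨a, b, hab, rfl, h⟩ | ⟨a, b, hab, rfl, h⟩ | ⟨a, ha, b, rfl, h⟩ | ⟨a, ha, b, rfl, h⟩)
    · cases h; exact hab.ne rfl
    · cases h; exact hab.ne rfl
    · exact (Sum.inl_ne_inr h).elim
    · exact (Sum.inr_ne_inl h).elim

/-- The join `G₁ ∨ G₂` of two graphs. -/
def graphJoin {α β : Type*} (G₁ : SimpleGraph α) (G₂ : SimpleGraph β) : SimpleGraph (α ⊕ β) :=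
  partialJoin G₁ Set.univ G₂

/-- The disjoint union of a family of graphs. -/
def sigmaGraph {ι : Type*} {α : ι → Type*} (G : ∀ i, SimpleGraph (α i)) :
    SimpleGraph (Σ i, α i) where
  Adj x y := ∃ (i : ι) (a b : α i), (G i).Adj a b ∧ x = ⟨i, a⟩ ∧ y = ⟨i, b⟩
  symm := by
    constructor
    rintro x y ⟨i, a, b, hab, rfl, rfl⟩
    exact ⟨i, b, a, hab.symm, rfl, rfl⟩
  loopless := by
    constructor
    rintro x ⟨i, a, b, hab, rfl, h⟩
    obtain rfl : a = b := by simpa using h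
    exact hab.ne rfl

/-!
Choose a dominating set `T` of `H` with `2m - 2` vertices; one exists because a graph without
isolated vertices has a dominating set containing at most half of its vertices. Put `λ₁, …, λ_m`
on the `m` remaining vertices and two strictly interlacing families `μ₀, μ₁` of `m - 1` numbers on
`T`. By partial fractions, for suitable nonzero `b`,
`∏ⱼ (x - μᵢⱼ) * (x - aᵢ - ∑ⱼ bᵢⱼ² / (x - μᵢⱼ)) = ∏ (x - λ)` with `aᵢ = ∑ λ - ∑ⱼ μᵢⱼ`. So the
diagonal matrix of all the `λ` and `μ`, bordered by two rows supported on the two halves of `T`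
and with corners `a₀, a₁`, has characteristic polynomial `∏ (x - λ)³`.

Block orthogonal conjugation then produces the right zero pattern without changing the spectrum.
The diagonal entries being distinct, the inverse function theorem gives orthogonal `U` near `1`
such that `U diag(d) Uᵀ ∈ S(H)`, with a prescribed first-order motion along the edges of `H`. As
`T` dominates, every vertex outside `T`, where the border vanishes, has a neighbour in `T`, so
this motion makes all rows of the border nonzero. A generic rotation of the two border rows makes
every join entry and the `K₂` edge nonzero; the latter uses `a₀ ≠ a₁`.
-/

section Domination

variable {V : Type*}

/-- `S` is a dominating set of `G`: every vertex outside `S` has a neighbour in `S`. -/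
def IsDominatingSet (G : SimpleGraph V) (S : Finset V) : Prop :=
  ∀ v ∉ S, ∃ w ∈ S, G.Adj v w

theorem IsDominatingSet.mono {G : SimpleGraph V} {S T : Finset V} (hS : IsDominatingSet G S)
    (hST : S ⊆ T) : IsDominatingSet G T := fun v hv ↦
  let ⟨w, hw, hvw⟩ := hS v fun h ↦ hv (hST h)
  ⟨w, hST hw, hvw⟩

theorem IsDominatingSet.compl_of_minimal [Fintype V] [DecidableEq V] {G : SimpleGraph V}
    (hG : ∀ v, ¬ G.IsIsolated v) {S : Finset V} (hS : Minimal (IsDominatingSet G) S) :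
    IsDominatingSet G Sᶜ := by
  intro v hv
  have hvS : v ∈ S := by simpa using hv
  have hdel : ¬ IsDominatingSet G (S.erase v) := fun h ↦
    (Finset.erase_ssubset hvS).not_ge (hS.2 h (Finset.erase_subset v S))
  simp only [IsDominatingSet, not_forall] at hdel
  obtain ⟨u, hu, hu'⟩ := hdel
  by_cases huv : u = v
  · subst huv
    obtain ⟨w, hw⟩ : ∃ w, G.Adj u w := by simpa [SimpleGraph.IsIsolated] using hG u
    exact ⟨w, Finset.mem_compl.2 fun hwS ↦
      hu' ⟨w, Finset.mem_erase.2 ⟨hw.ne', hwS⟩, hw⟩, hw⟩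
  · have huS : u ∉ S := fun h ↦ hu (Finset.mem_erase.2 ⟨huv, h⟩)
    obtain ⟨w, hwS, hw⟩ := hS.1 u huS
    obtain rfl : w = v := by
      by_contra hwv
      exact hu' ⟨w, Finset.mem_erase.2 ⟨hwv, hwS⟩, hw⟩
    exact ⟨u, Finset.mem_compl.2 huS, hw.symm⟩

theorem exists_isDominatingSet_two_mul_card_le [Fintype V] {G : SimpleGraph V}
    (hG : ∀ v, ¬ G.IsIsolated v) :
    ∃ S : Finset V, IsDominatingSet G S ∧ 2 * S.card ≤ Fintype.card V := by
  classical
  obtain ⟨S, -, hS⟩ := exists_minimal_le_of_wellFoundedLT (IsDominatingSet G) Finset.univ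
    fun v hv ↦ absurd (Finset.mem_univ v) hv
  have hcard := S.card_add_card_compl
  rcases le_total S.card Sᶜ.card with h | h
  · exact ⟨S, hS.1, by lia⟩
  · exact ⟨Sᶜ, .compl_of_minimal hG hS, by lia⟩

end Domination

section DiagonalPerturbation

variable {n : Type*} [Fintype n] [DecidableEq n]

theorem isSymm_mul_diagonal_mul_transpose (U : Matrix n n ℝ) (d : n → ℝ) :
    (U * diagonal d * Uᵀ).IsSymm := by
  simp [Matrix.IsSymm, Matrix.mul_assoc]

theorem lie_diagonal_apply (M : Matrix n n ℝ) (d : n → ℝ) (i j : n) :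
    ⁅M, diagonal d⁆ i j = M i j * (d j - d i) := by
  rw [Ring.lie_def, Matrix.sub_apply, mul_diagonal, diagonal_mul]
  ring

theorem symm_add_lie_diagonal_ext {d : n → ℝ} (hd : Function.Injective d)
    {S S' M M' : Matrix n n ℝ} (hS : S.IsSymm) (hS' : S'.IsSymm) (hM : M.IsSymm) (hM' : M'.IsSymm)
    (h : S + ⁅M, diagonal d⁆ = S' + ⁅M', diagonal d⁆) :
    S = S' ∧ ∀ i j, i ≠ j → M i j = M' i j := by
  have hentry (i j : n) :
      S i j + M i j * (d j - d i) = S' i j + M' i j * (d j - d i) := by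
    simpa [lie_diagonal_apply] using congr_fun₂ h i j
  have hswap (i j : n) :
      S i j - M i j * (d j - d i) = S' i j - M' i j * (d j - d i) := by
    have := hentry j i
    rw [hS.apply, hS'.apply, hM.apply, hM'.apply] at this
    linear_combination this
  refine ⟨?_, fun i j hij ↦ ?_⟩
  · ext i j
    linarith [hentry i j, hswap i j]
  · refine mul_right_cancel₀ (sub_ne_zero.2 (hd.ne hij.symm)) ?_
    linarith [hentry i j, hswap i j]

/-- A smooth self-map of the space of matrices: the symmetric part of its value is `Uᵀ U` and the
skew part records the off-diagonal entries of `U diag(d) Uᵀ`, weighted by the differences of the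
`d i`. Inverting it near `1` yields orthogonal `U` for which these entries are prescribed. -/
def gramAddLie (d : n → ℝ) (U : Matrix n n ℝ) : Matrix n n ℝ :=
  Uᵀ * U + ⁅U * diagonal d * Uᵀ, diagonal d⁆

/-- The derivative of `gramAddLie d` at the identity matrix. -/
def gramAddLieDeriv (d : n → ℝ) : Matrix n n ℝ →ₗ[ℝ] Matrix n n ℝ where
  toFun K := (K + Kᵀ) + ⁅K * diagonal d + diagonal d * Kᵀ, diagonal d⁆
  map_add' K K' := by
    simp only [transpose_add, add_mul, mul_add, Ring.lie_def]
    abel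
  map_smul' c K := by
    simp [Ring.lie_def, smul_add, smul_sub, mul_add, add_mul, transpose_smul]

theorem gramAddLieDeriv_apply (d : n → ℝ) (K : Matrix n n ℝ) :
    gramAddLieDeriv d K = (K + Kᵀ) + ⁅K * diagonal d + diagonal d * Kᵀ, diagonal d⁆ := rfl

theorem gramAddLieDeriv_injective {d : n → ℝ} (hd : Function.Injective d) :
    Function.Injective (gramAddLieDeriv d) := by
  rw [injective_iff_map_eq_zero]
  intro K hK
  have hsymm : (K * diagonal d + diagonal d * Kᵀ).IsSymm := by
    simp [Matrix.IsSymm, add_comm]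
  obtain ⟨hskew, hoff⟩ := symm_add_lie_diagonal_ext (S' := 0) (M' := 0) hd
    (isSymm_add_transpose_self K) isSymm_zero hsymm isSymm_zero
    (by simpa [gramAddLieDeriv_apply, Ring.lie_def] using hK)
  have hKT (i j : n) : K i j + K j i = 0 := congr_fun₂ hskew i j
  ext i j
  by_cases hij : i = j
  · subst hij
    simpa using hKT i i
  · have hcomm : K i j * d j + d i * K j i = 0 := by simpa using hoff i j hij
    have : K i j * (d j - d i) = 0 := by linear_combination hcomm - d i * hKT i j
    simpa [sub_ne_zero.2 (hd.ne (Ne.symm hij))] using this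

theorem gramAddLieDeriv_of_skew (d : n → ℝ) {K : Matrix n n ℝ} (hK : Kᵀ = -K) :
    gramAddLieDeriv d K = ⁅⁅K, diagonal d⁆, diagonal d⁆ := by
  simp [gramAddLieDeriv_apply, hK, Ring.lie_def, sub_eq_add_neg]

theorem isSymm_lie_diagonal_of_skew (d : n → ℝ) {K : Matrix n n ℝ} (hK : Kᵀ = -K) :
    ⁅K, diagonal d⁆.IsSymm := by
  simp [Matrix.IsSymm, hK, Ring.lie_def, add_comm, sub_eq_add_neg]

open scoped Matrix.Norms.Operator in
theorem hasStrictFDerivAt_gramAddLie (d : n → ℝ) :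
    HasStrictFDerivAt (gramAddLie d) (gramAddLieDeriv d).toContinuousLinearMap 1 := by
  have hid : HasStrictFDerivAt (fun U : Matrix n n ℝ ↦ U) (.id ℝ _) 1 := hasStrictFDerivAt_id 1
  have htr : HasStrictFDerivAt (fun U : Matrix n n ℝ ↦ Uᵀ)
      (transposeLinearEquiv n n ℝ ℝ).toLinearMap.toContinuousLinearMap 1 :=
    (transposeLinearEquiv n n ℝ ℝ).toLinearMap.toContinuousLinearMap.hasStrictFDerivAt
  have hconj := (hid.mul_const' (diagonal d)).mul' htr
  refine ((htr.mul' hid).add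
    ((hconj.mul_const' (diagonal d)).sub (hconj.const_mul (diagonal d)))).congr_fderiv ?_
  ext1 K
  change (1ᵀ * K + Kᵀ * 1) + ((1 * diagonal d * Kᵀ + K * diagonal d * 1ᵀ) * diagonal d -
    diagonal d * (1 * diagonal d * Kᵀ + K * diagonal d * 1ᵀ)) = gramAddLieDeriv d K
  simp [gramAddLieDeriv_apply, Ring.lie_def, add_comm]

theorem exists_orthogonal_curve_hasDerivAt_skew {d : n → ℝ} (hd : Function.Injective d)
    {K : Matrix n n ℝ} (hK : Kᵀ = -K) :
    ∃ U : ℝ → Matrix n n ℝ, U 0 = 1 ∧ (∀ i j, HasDerivAt (fun ε ↦ U ε i j) (K i j) 0) ∧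
      ∀ᶠ ε in nhds 0, U ε ∈ orthogonalGroup n ℝ ∧
        ∀ i j, i ≠ j → (U ε * diagonal d * (U ε)ᵀ) i j = ε * ⁅K, diagonal d⁆ i j := by
  open scoped Matrix.Norms.Operator in
  let L : Matrix n n ℝ ≃L[ℝ] Matrix n n ℝ :=
    (LinearEquiv.ofInjectiveEndo _ (gramAddLieDeriv_injective hd)).toContinuousLinearEquiv
  have hΦ : HasStrictFDerivAt (gramAddLie d) (L : Matrix n n ℝ →L[ℝ] Matrix n n ℝ) 1 :=
    hasStrictFDerivAt_gramAddLie d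
  let T : ℝ → Matrix n n ℝ := fun ε ↦ 1 + ε • ⁅⁅K, diagonal d⁆, diagonal d⁆
  have hT0 : T 0 = gramAddLie d 1 := by simp [T, gramAddLie, Ring.lie_def]
  have hT : HasDerivAt T ⁅⁅K, diagonal d⁆, diagonal d⁆ 0 :=
    (((hasDerivAt_id 0).smul_const _).const_add 1).congr_deriv (one_smul ℝ _)
  have hU : HasDerivAt (hΦ.localInverse ∘ T) K 0 := by
    have hLK : L.symm ⁅⁅K, diagonal d⁆, diagonal d⁆ = K :=
      L.symm_apply_eq.2 (gramAddLieDeriv_of_skew d hK).symm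
    have hinv := (hT0 ▸ hΦ.to_localInverse.hasFDerivAt).comp_hasDerivAt 0 hT
    exact hinv.congr_deriv hLK
  refine ⟨hΦ.localInverse ∘ T, ?_, fun i j ↦ ?_, ?_⟩
  · rw [Function.comp_apply, hT0, hΦ.localInverse_apply_image]
  · exact (entryLinearMap ℝ ℝ i j).toContinuousLinearMap.hasFDerivAt.comp_hasDerivAt 0 hU
  · filter_upwards [hT.continuousAt.tendsto.eventually (hT0 ▸ hΦ.eventually_right_inverse)]
      with ε hε
    have hTε : T ε = 1 + ⁅ε • ⁅K, diagonal d⁆, diagonal d⁆ := by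
      rw [Ring.lie_def (ε • _), Matrix.smul_mul, Matrix.mul_smul, ← smul_sub, ← Ring.lie_def]
    obtain ⟨hgram, hoff⟩ := symm_add_lie_diagonal_ext hd (isSymm_transpose_mul_self _) isSymm_one
      (isSymm_mul_diagonal_mul_transpose _ d) ((isSymm_lie_diagonal_of_skew d hK).smul ε)
      (hε.trans hTε)
    exact ⟨(mem_orthogonalGroup_iff' n ℝ).2 hgram, hoff⟩

end DiagonalPerturbation

section PatternRealisation

variable {V : Type*} [Fintype V]

-- The skew-symmetric velocity `K i j = y j - y i` pushes a zero coordinate `i` of `y` by the sum of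
-- the `y j ^ 2` over the neighbours of `i`; where `y i = y j` any nonzero skew value will do.
theorem exists_skew_adj_mulVec_ne_zero (H : SimpleGraph V) {d : V → ℝ} (hd : Function.Injective d)
    {y : V → ℝ} (hy : ∀ i, y i = 0 → ∃ j, H.Adj i j ∧ y j ≠ 0) :
    ∃ K : Matrix V V ℝ, Kᵀ = -K ∧ (∀ i j, K i j ≠ 0 ↔ H.Adj i j) ∧
      ∀ i, y i = 0 → (K *ᵥ y) i ≠ 0 := by
  classical
  let K : Matrix V V ℝ := of fun i j ↦
    if H.Adj i j then if y i = y j then d j - d i else y j - y i else 0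
  have hK (i j : V) :
      K i j = if H.Adj i j then if y i = y j then d j - d i else y j - y i else 0 := rfl
  refine ⟨K, ?_, fun i j ↦ ?_, fun i hi ↦ ?_⟩
  · ext i j
    simp only [transpose_apply, Matrix.neg_apply, hK, H.adj_comm j i, eq_comm (a := y j)]
    split_ifs <;> ring
  · by_cases hij : H.Adj i j
    · by_cases hyij : y i = y j
      · simp [hK, hij, hyij, sub_ne_zero, hd.ne hij.ne']
      · simp [hK, hij, hyij, sub_ne_zero, Ne.symm hyij]
    · simp [hK, hij]
  · have hterm (j : V) : K i j * y j = if H.Adj i j then y j ^ 2 else 0 := by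
      rw [hK, hi]
      split_ifs with hij h0
      · simp [← h0]
      · ring
      · ring
    obtain ⟨w, hiw, hyw⟩ := hy i hi
    simp only [mulVec, dotProduct, hterm]
    refine (Finset.sum_pos' (fun j _ ↦ by positivity) ⟨w, Finset.mem_univ w, ?_⟩).ne'
    rw [if_pos hiw]
    positivity

theorem exists_orthogonal_inS_mulVec_ne_zero [DecidableEq V] (H : SimpleGraph V) {d : V → ℝ}
    (hd : Function.Injective d) {y : V → ℝ} (hy : ∀ i, y i = 0 → ∃ j, H.Adj i j ∧ y j ≠ 0) :
    ∃ U ∈ orthogonalGroup V ℝ, inS H (U * diagonal d * Uᵀ) ∧ ∀ i, (U *ᵥ y) i ≠ 0 := by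
  obtain ⟨K, hskew, hKadj, hKy⟩ := exists_skew_adj_mulVec_ne_zero H hd hy
  obtain ⟨U, hU0, hUderiv, hU⟩ := exists_orthogonal_curve_hasDerivAt_skew hd hskew
  have hUy (i : V) : ∀ᶠ ε in nhdsWithin 0 {0}ᶜ, (U ε *ᵥ y) i ≠ 0 := by
    have hder : HasDerivAt (fun ε ↦ (U ε *ᵥ y) i) ((K *ᵥ y) i) 0 :=
      HasDerivAt.fun_sum fun j _ ↦ (hUderiv i j).mul_const (y j)
    by_cases hi : y i = 0
    · exact hder.eventually_ne (hKy i hi)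
    · exact (hder.continuousAt.eventually_ne (by simpa [hU0] using hi)).filter_mono
        nhdsWithin_le_nhds
  obtain ⟨ε, ⟨hUε, hoff⟩, hyε, hε⟩ := ((hU.filter_mono nhdsWithin_le_nhds).and
    ((Filter.eventually_all.2 hUy).and self_mem_nhdsWithin)).exists
  refine ⟨U ε, hUε, ⟨isSymm_mul_diagonal_mul_transpose _ d, fun i j hij ↦ ?_⟩, hyε⟩
  rw [hoff i j hij, lie_diagonal_apply, mul_ne_zero_iff_left hε,
    mul_ne_zero_iff_right (sub_ne_zero.2 (hd.ne hij.symm)), hKadj]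

end PatternRealisation

section Interlacing

open Polynomial in
theorem degree_prod_X_sub_C_sub_mul_prod_lt {R : Type*} [CommRing R] [Nontrivial R] {k : ℕ}
    (lam : Fin (k + 1) → R) (mu : Fin k → R) :
    (∏ i, (X - C (lam i)) - (X - C (∑ i, lam i - ∑ j, mu j)) * ∏ j, (X - C (mu j))).degree <
      (k : WithBot ℕ) := by
  set nu : Fin (k + 1) → R := Fin.cons (∑ i, lam i - ∑ j, mu j) mu with hnu
  have hfactor : (X - C (∑ i, lam i - ∑ j, mu j)) * ∏ j, (X - C (mu j)) =
      ∏ i, (X - C (nu i)) := by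
    simp [Fin.prod_univ_succ, hnu]
  have hsum : ∑ i, nu i = ∑ i, lam i := by simp [Fin.sum_univ_succ, hnu]
  have hdeg (f : Fin (k + 1) → R) : (∏ i, (X - C (f i))).natDegree = k + 1 := by simp
  have hlead (f : Fin (k + 1) → R) : (∏ i, (X - C (f i))).coeff (k + 1) = 1 := by
    simpa using (monic_prod_X_sub_C f Finset.univ).coeff_natDegree
  have hsub (f : Fin (k + 1) → R) : (∏ i, (X - C (f i))).coeff k = -∑ i, f i := by
    simpa using prod_X_sub_C_coeff_card_pred Finset.univ f (by simp)
  rw [hfactor, degree_lt_iff_coeff_zero]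
  intro m hm
  rw [coeff_sub, sub_eq_zero]
  obtain rfl | rfl | hm : m = k ∨ m = k + 1 ∨ k + 1 < m := by lia
  · rw [hsub, hsub, hsum]
  · rw [hlead, hlead]
  · rw [coeff_eq_zero_of_natDegree_lt (by rwa [hdeg]),
      coeff_eq_zero_of_natDegree_lt (by rwa [hdeg])]

/-- The residue at `mu j` in the partial fraction expansion of `∏ (x - lam i) / ∏ (x - mu j)`,
with the opposite sign. -/
def negResidue {F : Type*} [Field F] {k : ℕ} (lam : Fin (k + 1) → F) (mu : Fin k → F)
    (j : Fin k) : F :=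
  -(Lagrange.nodalWeight Finset.univ mu j * ∏ i, (mu j - lam i))

theorem prod_mul_sub_sum_negResidue {F : Type*} [Field F] {k : ℕ} (lam : Fin (k + 1) → F)
    {mu : Fin k → F} (hmu : Function.Injective mu) {x : F} (hx : ∀ j, x ≠ mu j) :
    (∏ j, (x - mu j)) *
      (x - (∑ i, lam i - ∑ j, mu j) - ∑ j, negResidue lam mu j / (x - mu j)) =
      ∏ i, (x - lam i) := by
  have hinterp := congrArg (Polynomial.eval x) <| Lagrange.eq_interpolate (s := Finset.univ)
    (hmu.injOn) (by simpa using degree_prod_X_sub_C_sub_mul_prod_lt lam mu)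
  have hsum : ∑ j, negResidue lam mu j / (x - mu j) =
      -∑ j, Lagrange.nodalWeight Finset.univ mu j * (x - mu j)⁻¹ * ∏ i, (mu j - lam i) := by
    rw [← Finset.sum_neg_distrib]
    refine Finset.sum_congr rfl fun j _ ↦ ?_
    rw [negResidue]
    ring
  have hnode (j : Fin k) : ∏ l, (mu j - mu l) = 0 :=
    Finset.prod_eq_zero (Finset.mem_univ j) (sub_self _)
  rw [Lagrange.eval_interpolate_not_at_node _ fun j _ ↦ hx j, Lagrange.eval_nodal] at hinterp
  simp only [Polynomial.eval_sub, Polynomial.eval_mul, Polynomial.eval_prod, Polynomial.eval_X,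
    Polynomial.eval_C, Polynomial.eval_finsetSum, hnode, mul_zero, sub_zero] at hinterp
  rw [hsum]
  linear_combination -hinterp

/-- `mu` strictly interlaces `lam`: there is exactly one `mu j` in each gap of `lam`. -/
def StrictlyInterlaces {k : ℕ} (lam : Fin (k + 1) → ℝ) (mu : Fin k → ℝ) : Prop :=
  ∀ j, lam j.castSucc < mu j ∧ mu j < lam j.succ

namespace StrictlyInterlaces

variable {k : ℕ} {lam : Fin (k + 1) → ℝ} {mu nu : Fin k → ℝ}

theorem strictMono_left (h : StrictlyInterlaces lam mu) : StrictMono lam :=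
  Fin.strictMono_iff_lt_succ.2 fun j ↦ (h j).1.trans (h j).2

theorem lt_of_lt (hmu : StrictlyInterlaces lam mu) (hnu : StrictlyInterlaces lam nu)
    {i j : Fin k} (hij : i < j) : mu i < nu j :=
  calc mu i < lam i.succ := (hmu i).2
    _ ≤ lam j.castSucc := hmu.strictMono_left.monotone (Fin.succ_le_castSucc_iff.2 hij)
    _ < nu j := (hnu j).1

theorem strictMono_right (h : StrictlyInterlaces lam mu) : StrictMono mu :=
  fun _ _ hij ↦ h.lt_of_lt h hij

theorem ne_of_ne (hmu : StrictlyInterlaces lam mu) (hnu : StrictlyInterlaces lam nu)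
    {i j : Fin k} (hij : i ≠ j) : mu i ≠ nu j :=
  hij.lt_or_gt.elim (fun h ↦ (hmu.lt_of_lt hnu h).ne) fun h ↦ (hnu.lt_of_lt hmu h).ne'

theorem left_ne_right (h : StrictlyInterlaces lam mu) (i : Fin (k + 1)) (j : Fin k) :
    lam i ≠ mu j := by
  rcases le_or_gt i j.castSucc with hij | hij
  · exact ((h.strictMono_left.monotone hij).trans_lt (h j).1).ne
  · exact ((h j).2.trans_le (h.strictMono_left.monotone (Fin.castSucc_lt_iff_succ_le.1 hij))).ne'

theorem injective_elim_uncurry {ι : Type*} {mu : ι → Fin k → ℝ}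
    (hmu : ∀ i, StrictlyInterlaces lam (mu i)) (hlam : StrictMono lam)
    (hinj : ∀ j, Function.Injective fun i ↦ mu i j) :
    Function.Injective (Sum.elim lam (Function.uncurry mu)) := by
  refine hlam.injective.sumElim ?_ fun l p ↦ (hmu p.1).left_ne_right l p.2
  rintro ⟨i, j⟩ ⟨i', j'⟩ h
  obtain rfl : j = j' := by
    by_contra hj
    exact (hmu i).ne_of_ne (hmu i') hj h
  exact congrArg (·, j) (hinj j h)

theorem negResidue_pos (h : StrictlyInterlaces lam mu) (j : Fin k) : 0 < negResidue lam mu j := by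
  have hfactor : ∏ i, (mu j - lam i) = (mu j - lam j.castSucc) * ((mu j - lam j.succ) *
      ∏ l ∈ Finset.univ.erase j, (mu j - lam (j.castSucc.succAbove l))) := by
    rw [Fin.prod_univ_succAbove _ j.castSucc, ← Finset.mul_prod_erase _ _ (Finset.mem_univ j),
      Fin.succAbove_castSucc_self]
  have hothers : 0 < ∏ l ∈ Finset.univ.erase j,
      (mu j - mu l)⁻¹ * (mu j - lam (j.castSucc.succAbove l)) := by
    refine Finset.prod_pos fun l hl ↦ ?_
    rcases (Finset.ne_of_mem_erase hl).lt_or_gt with hlj | hjl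
    · rw [Fin.succAbove_of_castSucc_lt _ _ (Fin.castSucc_lt_castSucc_iff.2 hlj)]
      have hmu := h.strictMono_right hlj
      exact mul_pos (inv_pos.2 (sub_pos.2 hmu)) (sub_pos.2 ((h l).1.trans hmu))
    · rw [Fin.succAbove_of_le_castSucc _ _ (Fin.castSucc_le_castSucc_iff.2 hjl.le)]
      have hmu := h.strictMono_right hjl
      exact mul_pos_of_neg_of_neg (inv_lt_zero.2 (sub_neg.2 hmu))
        (sub_neg.2 (hmu.trans (h l).2))
  rw [Finset.prod_mul_distrib] at hothers
  have hleft := sub_pos.2 (h j).1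
  have hright := sub_pos.2 (h j).2
  rw [negResidue, Lagrange.nodalWeight, hfactor]
  linarith [mul_pos (mul_pos hleft hright) hothers]

theorem exists_sq_prod_mul_sub_sum (h : StrictlyInterlaces lam mu) :
    ∃ b : Fin k → ℝ, (∀ j, b j ≠ 0) ∧ ∀ x, (∀ j, x ≠ mu j) →
      (∏ j, (x - mu j)) * (x - (∑ i, lam i - ∑ j, mu j) - ∑ j, b j ^ 2 / (x - mu j)) =
        ∏ i, (x - lam i) := by
  refine ⟨fun j ↦ √(negResidue lam mu j), fun j ↦ (Real.sqrt_pos.2 (h.negResidue_pos j)).ne',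
    fun x hx ↦ ?_⟩
  simp only [Real.sq_sqrt (h.negResidue_pos _).le]
  exact prod_mul_sub_sum_negResidue lam h.strictMono_right.injective hx

end StrictlyInterlaces

theorem exists_strictlyInterlaces_family {k : ℕ} {lam : Fin (k + 1) → ℝ} (hlam : StrictMono lam)
    (r : ℕ) : ∃ mu : Fin r → Fin k → ℝ,
      (∀ i, StrictlyInterlaces lam (mu i)) ∧ ∀ j, StrictMono fun i ↦ mu i j := by
  let t : Fin r → ℝ := fun i ↦ (i + 1) / (r + 1)
  have ht0 (i : Fin r) : 0 < t i := by positivity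
  have ht1 (i : Fin r) : t i < 1 := by
    rw [div_lt_one (by positivity)]
    exact_mod_cast Nat.succ_lt_succ i.is_lt
  have ht : StrictMono t := fun i i' hii' ↦ by
    have hval : (i : ℝ) < i' := by exact_mod_cast hii'
    exact div_lt_div_of_pos_right (by gcongr) (by positivity)
  have hgap (j : Fin k) : lam j.castSucc < lam j.succ := hlam j.castSucc_lt_succ
  refine ⟨fun i j ↦ AffineMap.lineMap (lam j.castSucc) (lam j.succ) (t i), fun i j ↦ ?_,
    fun j i i' hii' ↦ (lineMap_lt_lineMap_iff_of_lt' (hgap j)).2 (ht hii')⟩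
  exact ⟨(left_lt_lineMap_iff_lt (ht0 i)).2 (hgap j), (lineMap_lt_right_iff_lt (ht1 i)).2 (hgap j)⟩

end Interlacing

section BorderedDiagonal

variable {V W ι : Type*} [DecidableEq V] [DecidableEq W] [DecidableEq ι]

/-- The symmetric matrix with diagonal blocks `diag(a)` and `diag(d)` and off-diagonal block `B`:
a diagonal matrix bordered by the columns of `B`. -/
def borderedDiagonal {R : Type*} [Zero R] (a : ι → R) (B : Matrix V ι R) (d : V → R) :
    Matrix (ι ⊕ V) (ι ⊕ V) R :=
  fromBlocks (diagonal a) Bᵀ B (diagonal d)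

theorem eval_charpoly_borderedDiagonal [Fintype V] [Fintype ι] {F : Type*} [Field F] (a : ι → F)
    {B : Matrix V ι F} (hB : ∀ v i j, i ≠ j → B v i * B v j = 0) {d : V → F} {x : F}
    (hx : ∀ v, x ≠ d v) :
    (borderedDiagonal a B d).charpoly.eval x =
      (∏ v, (x - d v)) * ∏ i, (x - a i - ∑ v, B v i ^ 2 / (x - d v)) := by
  have hblocks : scalar (ι ⊕ V) x - borderedDiagonal a B d =
      fromBlocks (diagonal fun i ↦ x - a i) (-Bᵀ) (-B) (diagonal fun v ↦ x - d v) := by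
    rw [scalar_apply, ← Sum.elim_lam_const_lam_const, ← fromBlocks_diagonal, borderedDiagonal,
      sub_eq_add_neg, fromBlocks_neg, fromBlocks_add]
    simp [← sub_eq_add_neg]
  have hinv : diagonal (fun v ↦ (x - d v)⁻¹) * diagonal (fun v ↦ x - d v) = 1 := by
    simp [inv_mul_cancel₀ (sub_ne_zero.2 (hx _))]
  let _ := invertibleOfLeftInverse _ _ hinv
  have hschur : (diagonal fun i ↦ x - a i) - -Bᵀ * ⅟ (diagonal fun v ↦ x - d v) * -B =
      diagonal fun i ↦ x - a i - ∑ v, B v i ^ 2 / (x - d v) := by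
    rw [invOf_eq_left_inv hinv, Matrix.neg_mul, Matrix.neg_mul, Matrix.mul_neg, neg_neg]
    ext i j
    rw [Matrix.sub_apply, Matrix.mul_apply]
    simp only [mul_diagonal, transpose_apply]
    obtain rfl | hij := eq_or_ne i j
    · simp only [diagonal_apply_eq]
      congr! 2 with v
      ring
    · simp only [diagonal_apply_ne _ hij, zero_sub, neg_eq_zero]
      exact Finset.sum_eq_zero fun v _ ↦ by linear_combination (x - d v)⁻¹ * hB v i j hij
  rw [eval_charpoly, hblocks, det_fromBlocks₂₂, hschur, det_diagonal, det_diagonal]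

theorem charpoly_borderedDiagonal_submatrix [Fintype V] [Fintype W] [Fintype ι] {R : Type*}
    [CommRing R] (a : ι → R) (B : Matrix W ι R) (d : W → R) (e : V ≃ W) :
    (borderedDiagonal a (B.submatrix e id) (d ∘ e)).charpoly =
      (borderedDiagonal a B d).charpoly := by
  have hreindex : borderedDiagonal a (B.submatrix e id) (d ∘ e) =
      reindex ((Equiv.refl ι).sumCongr e).symm ((Equiv.refl ι).sumCongr e).symm
        (borderedDiagonal a B d) := by
    ext (i | v) (j | w) <;> simp [borderedDiagonal, diagonal_apply]
  rw [hreindex, charpoly_reindex]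

theorem charpoly_orthogonal_conj {n R : Type*} [Fintype n] [DecidableEq n] [CommRing R]
    {P : Matrix n n R} (hP : P ∈ orthogonalGroup n R) (M : Matrix n n R) :
    (P * M * Pᵀ).charpoly = M.charpoly := by
  have hP' : Pᵀ * P = 1 := (mem_orthogonalGroup_iff' n R).1 hP
  rw [charpoly_mul_comm, ← Matrix.mul_assoc, hP', Matrix.one_mul]

theorem charpoly_fromBlocks_orthogonal_conj [Fintype V] [Fintype ι] {R : Type*} [CommRing R]
    {P : Matrix ι ι R} (hP : P ∈ orthogonalGroup ι R) {Q : Matrix V V R}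
    (hQ : Q ∈ orthogonalGroup V R) (a : ι → R) (B : Matrix V ι R) (d : V → R) :
    (fromBlocks (P * diagonal a * Pᵀ) (Q * B * Pᵀ)ᵀ (Q * B * Pᵀ) (Q * diagonal d * Qᵀ)).charpoly =
      (borderedDiagonal a B d).charpoly := by
  have hPQ : fromBlocks P 0 0 Q ∈ orthogonalGroup (ι ⊕ V) R := by
    rw [mem_orthogonalGroup_iff] at hP hQ ⊢
    simp [fromBlocks_transpose, fromBlocks_multiply, hP, hQ]
  rw [← charpoly_orthogonal_conj hPQ (borderedDiagonal a B d), borderedDiagonal]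
  simp [fromBlocks_transpose, fromBlocks_multiply, Matrix.mul_assoc]

open Polynomial in
theorem exists_charpoly_borderedDiagonal_eq_pow [Fintype ι] {k : ℕ} {lam : Fin (k + 1) → ℝ}
    {mu : ι → Fin k → ℝ} (hmu : ∀ i, StrictlyInterlaces lam (mu i)) :
    ∃ B : Matrix (Fin (k + 1) ⊕ ι × Fin k) ι ℝ, (∀ p, (B *ᵥ 1) (.inr p) ≠ 0) ∧
      (borderedDiagonal (fun i ↦ ∑ l, lam l - ∑ j, mu i j) B
        (Sum.elim lam (Function.uncurry mu))).charpoly =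
        (∏ l, (X - C (lam l))) ^ (Fintype.card ι + 1) := by
  choose b hb0 hb using fun i ↦ (hmu i).exists_sq_prod_mul_sub_sum
  let B : Matrix (Fin (k + 1) ⊕ ι × Fin k) ι ℝ :=
    of (Sum.elim 0 fun p ↦ Pi.single p.1 (b p.1 p.2))
  have hBl (l : Fin (k + 1)) (i : ι) : B (.inl l) i = 0 := rfl
  have hBr (p : ι × Fin k) : B (.inr p) = Pi.single p.1 (b p.1 p.2) := rfl
  refine ⟨B, fun p ↦ by simp [mulVec, hBr, hb0], ?_⟩
  refine eq_of_infinite_eval_eq _ _ <| (Set.finite_range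
    (Sum.elim lam (Function.uncurry mu))).infinite_compl.mono fun x hx ↦ ?_
  have hx' (v) : x ≠ Sum.elim lam (Function.uncurry mu) v := fun h ↦ hx ⟨v, h.symm⟩
  have hBorth (v) (i j : ι) (hij : i ≠ j) : B v i * B v j = 0 := by
    rcases v with l | p
    · simp [hBl]
    · rw [hBr]
      obtain rfl | hi := eq_or_ne i p.1
      · rw [Pi.single_eq_of_ne hij.symm, mul_zero]
      · rw [Pi.single_eq_of_ne hi, zero_mul]
  have hsum (i : ι) : ∑ v, B v i ^ 2 / (x - Sum.elim lam (Function.uncurry mu) v) =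
      ∑ j, b i j ^ 2 / (x - mu i j) := by
    rw [Fintype.sum_sum_type, Fintype.sum_prod_type, Finset.sum_eq_single i]
    all_goals simp +contextual [hBl, hBr]
  have hprod : ∏ v, (x - Sum.elim lam (Function.uncurry mu) v) =
      (∏ l, (x - lam l)) * ∏ i, ∏ j, (x - mu i j) := by
    simp [Fintype.prod_sum_type, Fintype.prod_prod_type]
  change eval x _ = eval x _
  rw [eval_charpoly_borderedDiagonal _ hBorth hx', hprod, mul_assoc, ← Finset.prod_mul_distrib]
  simp only [hsum, hb _ _ fun j ↦ hx' (.inr (_, j)), Finset.prod_const, Finset.card_univ]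
  simp [eval_prod, pow_succ']

end BorderedDiagonal

section Join

variable {V W : Type*}

@[simp]
theorem graphJoin_adj_inl_inl {G : SimpleGraph V} {H : SimpleGraph W} {v v' : V} :
    (graphJoin G H).Adj (.inl v) (.inl v') ↔ G.Adj v v' := by
  simp [graphJoin, partialJoin]

@[simp]
theorem graphJoin_adj_inr_inr {G : SimpleGraph V} {H : SimpleGraph W} {w w' : W} :
    (graphJoin G H).Adj (.inr w) (.inr w') ↔ H.Adj w w' := by
  simp [graphJoin, partialJoin]

@[simp]
theorem graphJoin_adj_inl_inr {G : SimpleGraph V} {H : SimpleGraph W} {v : V} {w : W} :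
    (graphJoin G H).Adj (.inl v) (.inr w) := by
  simp [graphJoin, partialJoin]

@[simp]
theorem graphJoin_adj_inr_inl {G : SimpleGraph V} {H : SimpleGraph W} {v : V} {w : W} :
    (graphJoin G H).Adj (.inr w) (.inl v) := by
  simp [graphJoin, partialJoin]

theorem inS_graphJoin_fromBlocks {G : SimpleGraph V} {H : SimpleGraph W} {A : Matrix V V ℝ}
    {B : Matrix W V ℝ} {D : Matrix W W ℝ} (hA : inS G A) (hD : inS H D) (hB : ∀ w v, B w v ≠ 0) :
    inS (graphJoin G H) (fromBlocks A Bᵀ B D) := by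
  refine ⟨hA.1.fromBlocks (transpose_transpose B) hD.1, ?_⟩
  rintro (v | w) (v' | w') hne
  · simpa using hA.2 v v' (by simpa using hne)
  · simpa using hB w' v
  · simpa using hB w v'
  · simpa using hD.2 w w' (by simpa using hne)

theorem exists_orthogonal_mulVec_ne_zero {ι : Type*} [Finite ι] {w : ι → Fin 2 → ℝ}
    (hw : ∀ i, w i ≠ 0) : ∃ R ∈ orthogonalGroup (Fin 2) ℝ, ∀ i j, (R *ᵥ w i) j ≠ 0 := by
  have haffine (a b : ℝ) (hab : a ≠ 0 ∨ b ≠ 0) : ∀ᶠ t in cofinite, a + t * b ≠ 0 := by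
    refine Set.Subsingleton.finite fun s hs t ht ↦ ?_
    replace hs : a + s * b = 0 := not_not.1 hs
    replace ht : a + t * b = 0 := not_not.1 ht
    have hb : b ≠ 0 := by
      rintro rfl
      simp_all
    exact mul_right_cancel₀ hb (by linear_combination hs - ht)
  have hw' (i : ι) : w i 0 ≠ 0 ∨ w i 1 ≠ 0 := by
    simpa [Function.ne_iff, Fin.exists_fin_two] using hw i
  obtain ⟨t, ht⟩ := (eventually_all.2 fun i ↦ (haffine (w i 0) (w i 1) (hw' i)).and
    (haffine (w i 1) (-w i 0) (by simpa [or_comm] using hw' i))).exists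
  have hpos : 0 < 1 + t ^ 2 := by positivity
  refine ⟨(√(1 + t ^ 2))⁻¹ • !![1, t; -t, 1], (mem_orthogonalGroup_iff _ _).2 ?_, fun i ↦ ?_⟩
  · have hrow : !![1, t; -t, 1] * !![1, t; -t, 1]ᵀ = (1 + t ^ 2) • 1 := by
      ext a b
      fin_cases a <;> fin_cases b <;> simp [Matrix.mul_apply] <;> ring
    rw [transpose_smul, Matrix.smul_mul, Matrix.mul_smul, hrow, smul_smul, smul_smul, ← mul_inv,
      Real.mul_self_sqrt hpos.le, inv_mul_cancel₀ hpos.ne', one_smul]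
  · have hsqrt : √(1 + t ^ 2) ≠ 0 := (Real.sqrt_pos.2 hpos).ne'
    have hmulVec : !![1, t; -t, 1] *ᵥ w i = ![w i 0 + t * w i 1, w i 1 + t * -w i 0] := by
      ext j
      fin_cases j <;> simp [mulVec, dotProduct, add_comm]
    rw [smul_mulVec, hmulVec]
    exact Fin.forall_fin_two.2 ⟨mul_ne_zero (inv_ne_zero hsqrt) (ht i).1,
      mul_ne_zero (inv_ne_zero hsqrt) (ht i).2⟩

theorem inS_top_orthogonal_conj_diagonal {R : Matrix (Fin 2) (Fin 2) ℝ}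
    (hR : R ∈ orthogonalGroup (Fin 2) ℝ) (hR0 : ∀ i, R i 0 ≠ 0) {a : Fin 2 → ℝ} (ha : a 0 ≠ a 1) :
    inS ⊤ (R * diagonal a * Rᵀ) := by
  have hsymm := isSymm_mul_diagonal_mul_transpose R a
  have hrows : R 0 0 * R 1 0 + R 0 1 * R 1 1 = 0 := by
    simpa [Matrix.mul_apply] using congr_fun₂ ((mem_orthogonalGroup_iff _ _).1 hR) 0 1
  have hentry : (R * diagonal a * Rᵀ) 0 1 = R 0 0 * R 1 0 * (a 0 - a 1) := by
    rw [Matrix.mul_apply]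
    simp only [mul_diagonal, transpose_apply, Fin.sum_univ_two]
    linear_combination a 1 * hrows
  have hne : (R * diagonal a * Rᵀ) 0 1 ≠ 0 := by
    simp [hentry, hR0, sub_ne_zero, ha]
  refine ⟨hsymm, fun i j hij ↦ iff_of_true ?_ hij⟩
  obtain ⟨rfl, rfl⟩ | ⟨rfl, rfl⟩ : i = 0 ∧ j = 1 ∨ i = 1 ∧ j = 0 := by lia
  · exact hne
  · rwa [hsymm.apply]

theorem exists_inS_graphJoin_charpoly_eq [Fintype V] [DecidableEq V] (H : SimpleGraph V)
    {a : Fin 2 → ℝ} (ha : a 0 ≠ a 1) {B : Matrix V (Fin 2) ℝ} {d : V → ℝ}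
    (hd : Function.Injective d)
    (hB : ∀ v, (B *ᵥ 1) v = 0 → ∃ w, H.Adj v w ∧ (B *ᵥ 1) w ≠ 0) :
    ∃ N, inS (graphJoin (⊤ : SimpleGraph (Fin 2)) H) N ∧
      N.charpoly = (borderedDiagonal a B d).charpoly := by
  obtain ⟨U, hU, hUd, hUB⟩ := exists_orthogonal_inS_mulVec_ne_zero H hd hB
  have hrow (v : V) : (U * B) v ≠ 0 := fun h ↦ hUB v <| by
    rw [mulVec_mulVec, mulVec, h, zero_dotProduct]
  obtain ⟨R, hR, hRw⟩ := exists_orthogonal_mulVec_ne_zero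
    (w := fun o : Option V ↦ o.elim (Pi.single 0 1) (U * B).row)
    (Option.rec (by simp) hrow)
  have hR0 (i : Fin 2) : R i 0 ≠ 0 := by simpa using hRw none i
  have hRB (v : V) (i : Fin 2) : (U * B * Rᵀ) v i ≠ 0 := by
    rw [mul_apply_eq_vecMul, vecMul_transpose]
    exact hRw (some v) i
  exact ⟨_, inS_graphJoin_fromBlocks (inS_top_orthogonal_conj_diagonal hR hR0 ha) hUd hRB,
    charpoly_fromBlocks_orthogonal_conj hR hU a B d⟩

theorem exists_equiv_sum_isRight_iff_mem [Fintype V] [DecidableEq V] (S : Finset V) {α β : Type*}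
    [Fintype α] [Fintype β] (hα : Sᶜ.card = Fintype.card α) (hβ : S.card = Fintype.card β) :
    ∃ e : V ≃ α ⊕ β, ∀ v, (e v).isRight ↔ v ∈ S := by
  let eα : {v // v ∉ S} ≃ α := Fintype.equivOfCardEq (by
    rw [← hα, ← Fintype.card_coe]
    simp)
  let eβ : {v // v ∈ S} ≃ β := Fintype.equivOfCardEq (by simpa using hβ)
  refine ⟨((Equiv.sumCompl (· ∈ S)).symm.trans (Equiv.sumComm _ _)).trans (eα.sumCongr eβ),
    fun v ↦ ?_⟩
  by_cases hv : v ∈ S <;> simp [hv, Equiv.sumCompl_symm_apply_of_pos,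
    Equiv.sumCompl_symm_apply_of_neg]

open Polynomial in
theorem exists_inS_graphJoin_charpoly_eq_pow_three [Fintype V] [DecidableEq V] {k : ℕ}
    (hV : Fintype.card V = 3 * (k + 2) - 2) {H : SimpleGraph V} {S : Finset V}
    (hS : IsDominatingSet H S) (hcard : S.card ≤ 2 * (k + 1)) {lam : Fin (k + 2) → ℝ}
    (hlam : StrictMono lam) :
    ∃ N, inS (graphJoin (⊤ : SimpleGraph (Fin 2)) H) N ∧
      N.charpoly = (∏ l, (X - C (lam l))) ^ 3 := by
  obtain ⟨T, hST, -, hT⟩ := Finset.exists_subsuperset_card_eq (Finset.subset_univ S) hcard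
    (by rw [Finset.card_univ]; lia)
  obtain ⟨e, he⟩ := exists_equiv_sum_isRight_iff_mem T (α := Fin (k + 2))
    (β := Fin 2 × Fin (k + 1)) (by rw [Finset.card_compl, Fintype.card_fin]; lia) (by simp [hT])
  obtain ⟨mu, hmu, hmono⟩ := exists_strictlyInterlaces_family hlam 2
  obtain ⟨B, hB, hcharpoly⟩ := exists_charpoly_borderedDiagonal_eq_pow hmu
  have hsum : ∑ j, mu 0 j < ∑ j, mu 1 j :=
    Finset.sum_lt_sum_of_nonempty Finset.univ_nonempty fun j _ ↦ hmono j Fin.zero_lt_one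
  have hBT {v : V} (hv : v ∈ T) : (B.submatrix e id *ᵥ 1) v ≠ 0 := by
    obtain ⟨p, hp⟩ := Sum.isRight_iff.1 ((he v).2 hv)
    simpa [mulVec, hp] using hB p
  have hd := (StrictlyInterlaces.injective_elim_uncurry hmu hlam
    fun j ↦ (hmono j).injective).comp e.injective
  obtain ⟨N, hN, hNchar⟩ := exists_inS_graphJoin_charpoly_eq H (B := B.submatrix e id)
    (a := fun i ↦ ∑ l, lam l - ∑ j, mu i j) (by simpa using hsum.ne) hd fun v hv ↦
      let ⟨w, hwT, hvw⟩ := hS.mono hST v fun hvT ↦ hBT hvT hv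
      ⟨w, hvw, hBT hwT⟩
  exact ⟨N, hN, by rw [hNchar, charpoly_borderedDiagonal_submatrix, hcharpoly, Fintype.card_fin]⟩

end Join

section Spectrum

variable {V : Type*} [Fintype V] [DecidableEq V]

open Polynomial in
theorem specMultiset_eq_nsmul_of_charpoly_eq_pow {A : Matrix V V ℝ} {ι : Type*} [Fintype ι]
    {lam : ι → ℝ} {r : ℕ} (hA : A.charpoly = (∏ i, (X - C (lam i))) ^ r) :
    specMultiset A = r • Finset.univ.val.map lam := by
  have hroots := roots_multiset_prod_X_sub_C (Finset.univ.val.map lam)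
  rw [Multiset.map_map] at hroots
  rw [specMultiset, hA, roots_pow]
  exact congrArg (r • ·) hroots

theorem qGraph_le_card_of_specMultiset_eq_nsmul {G : SimpleGraph V} {A : Matrix V V ℝ}
    (hA : inS G A) {s : Multiset ℝ} {r : ℕ} (hs : specMultiset A = r • s) :
    qGraph G ≤ s.card :=
  calc qGraph G ≤ qMat A := Nat.sInf_le ⟨A, hA, rfl⟩
    _ = (r • s).toFinset.card := by rw [qMat, hs]
    _ ≤ s.toFinset.card := Finset.card_le_card fun x hx ↦ by
      rw [Multiset.mem_toFinset] at hx ⊢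
      exact Multiset.mem_of_mem_nsmul hx
    _ ≤ s.card := s.toFinset_card_le

end Spectrum

theorem statement18_general {V : Type*} [Fintype V] [DecidableEq V] {k : ℕ}
    (hV : Fintype.card V = 3 * (k + 2) - 2) {H : SimpleGraph V} {S : Finset V}
    (hS : IsDominatingSet H S) (hcard : S.card ≤ 2 * (k + 1)) {lam : Fin (k + 2) → ℝ}
    (hlam : StrictMono lam) :
    (∃ N : Matrix (Fin 2 ⊕ V) (Fin 2 ⊕ V) ℝ, inS (graphJoin (⊤ : SimpleGraph (Fin 2)) H) N ∧
      specMultiset N = 3 • (Finset.univ.val.map lam)) ∧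
    qGraph (graphJoin (⊤ : SimpleGraph (Fin 2)) H) ≤ k + 2 := by
  obtain ⟨N, hN, hchar⟩ := exists_inS_graphJoin_charpoly_eq_pow_three hV hS hcard hlam
  have hspec := specMultiset_eq_nsmul_of_charpoly_eq_pow hchar
  exact ⟨⟨N, hN, hspec⟩, by simpa using qGraph_le_card_of_specMultiset_eq_nsmul hN hspec⟩

/-- Example 3.13: for `m = k + 2 ≥ 2` and a connected graph `H` on `3m − 2`
vertices, for any `λ₁ < … < λ_m` some `N ∈ S(K₂ ∨ H)` has spectrum `{λ₁^(3), …, λ_m^(3)}`;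
in particular `q(K₂ ∨ H) ≤ m`. -/
theorem statement18 (k : ℕ) (H : SimpleGraph (Fin (3 * (k + 2) - 2))) (hH : H.Connected)
    (lam : Fin (k + 2) → ℝ) (hlam : StrictMono lam) :
    (∃ N : Matrix (Fin 2 ⊕ Fin (3 * (k + 2) - 2)) (Fin 2 ⊕ Fin (3 * (k + 2) - 2)) ℝ,
      inS (graphJoin (⊤ : SimpleGraph (Fin 2)) H) N ∧
      specMultiset N = 3 • (Finset.univ.val.map lam)) ∧
    qGraph (graphJoin (⊤ : SimpleGraph (Fin 2)) H) ≤ k + 2 := by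
  have : Nontrivial (Fin (3 * (k + 2) - 2)) := Fin.nontrivial_iff_two_le.2 (by lia)
  obtain ⟨S, hS, hcard⟩ := exists_isDominatingSet_two_mul_card_le hH.preconnected.not_isIsolated
  exact statement18_general (Fintype.card_fin _) hS (by rw [Fintype.card_fin] at hcard; lia) hlam
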